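/- Let J ⊆ ℝ be an interval, n ∈ ℕ, a₀ < a₁ < ... < aₙ real numbers, E a Banach space, F = End(E), and G₀, ..., G_{n−1} ∈ L^∞_loc(J; F) ∩ L¹(J; F). Set N = exp(max_{i<n} ‖G_i‖_{L¹(J;F)}) (with max over empty set equal 0), V = Σ_{0<j<n} ‖G_j − G_{j−1}‖_{L¹(J;F)}, and I = [a₀, aₙ]. Then for every absolutely continuous f : I → ℝ with f(I) ⊆ J, the function A : I → F defined by A(t) = f'(t) Gᵢ(f(t)) for t ∈ [aᵢ, a_{i+1}) (i < n) is Bochner integrable on I, and any evolution operator X for A in E satisfies ‖X(t, s)^{±1}‖ ≤ N² exp(N^{3+2N} V) for all s ≤ t in I. -/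

import Mathlib

open MeasureTheory Set intervalIntegral

/-- `f` is absolutely continuous on the set `s`: for every `ε > 0` there is `δ > 0` such
that for every finite family of non-overlapping subintervals of `s` of total length `< δ`,
the total variation of `f` over them is `< ε`. -/
def AbsolutelyContinuousOn (f : ℝ → ℝ) (s : Set ℝ) : Prop :=
  ∀ ε > (0 : ℝ), ∃ δ > (0 : ℝ), ∀ n : ℕ, ∀ u v : ℕ → ℝ,
    (∀ i < n, u i ∈ s ∧ v i ∈ s ∧ u i ≤ v i) →
    (∀ i < n, ∀ j < n, i ≠ j → Set.Ioo (u i) (v i) ∩ Set.Ioo (u j) (v j) = ∅) →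
    (∑ i ∈ Finset.range n, (v i - u i)) < δ →
    (∑ i ∈ Finset.range n, |f (v i) - f (u i)|) < ε

/-- `f` is locally absolutely continuous on the interval `I`: absolutely continuous on
every compact subinterval of `I`. -/
def LocallyAbsolutelyContinuousOn (f : ℝ → ℝ) (I : Set ℝ) : Prop :=
  ∀ a ∈ I, ∀ b ∈ I, AbsolutelyContinuousOn f (Set.Icc a b)

/-- `f'` is the derivative of `f` relative to `I`, in the convention of the paper:
it is the derivative at points of differentiability and `0` elsewhere. -/
def IsDerivWithinOf (f' f : ℝ → ℝ) (I : Set ℝ) : Prop :=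
  ∀ t ∈ I, (DifferentiableWithinAt ℝ f I t → HasDerivWithinAt f (f' t) I t) ∧
    (¬ DifferentiableWithinAt ℝ f I t → f' t = 0)

/-- `y ∈ L^∞_loc(J; E)`: `y` is Bochner measurable on `J` and essentially bounded on
every compact subinterval of `J`. -/
def LocEssBdd {E : Type*} [NormedAddCommGroup E] (y : ℝ → E) (J : Set ℝ) : Prop :=
  AEStronglyMeasurable y (volume.restrict J) ∧
  ∀ a ∈ J, ∀ b ∈ J, ∃ M : ℝ, ∀ᵐ t ∂(volume.restrict (Set.uIcc a b)), ‖y t‖ ≤ M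

/-- An evolution operator for `A` in `E` on the interval `I`: for each `s ∈ I`,
`X(·, s)` is a continuous operator solution of `X' = A ∘ X` with `X(s,s) = id`. -/
def IsEvolutionOperator {E : Type*} [NormedAddCommGroup E] [NormedSpace ℝ E]
    (I : Set ℝ) (A : ℝ → E →L[ℝ] E) (X : ℝ → ℝ → E →L[ℝ] E) : Prop :=
  ∀ s ∈ I, ContinuousOn (fun t => X t s) I ∧ X s s = ContinuousLinearMap.id ℝ E ∧
    ∀ u ∈ I, ∀ t ∈ I, X t s - X u s = ∫ τ in u..t, (A τ).comp (X τ s)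

/-!
Let `Φᵢ` be the fundamental solution of `Φ' = Gᵢ Φ` on the compact interval `f(I)`. By the chain
rule every solution `x` of `x' = A x` satisfies `x = (Φᵢ ∘ f) vᵢ` on `[aᵢ, aᵢ₊₁]` with `vᵢ`
constant. The norms of `Φᵢ` and `Φᵢ⁻¹` are at most `N`, and at `aᵢ₊₁` the constants are related by
`vᵢ₊₁ = (Φᵢ₊₁⁻¹ Φᵢ)(f aᵢ₊₁) vᵢ`. Since `(Φᵢ₊₁⁻¹ Φᵢ)' = -Φᵢ₊₁⁻¹ (Gᵢ₊₁ - Gᵢ) Φᵢ`, the transition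
factor has norm at most `1 + N² ‖Gᵢ₊₁ - Gᵢ‖_{L¹} ≤ exp (N² ‖Gᵢ₊₁ - Gᵢ‖_{L¹})`, however often `f`
oscillates. The product of all these factors gives the bound `N² exp (N² V)`.
-/

open Filter Topology
open scoped Nat

section Primitive

variable {F G H : Type*} [NormedAddCommGroup F] [NormedSpace ℝ F]
  [NormedAddCommGroup G] [NormedSpace ℝ G] [NormedAddCommGroup H] [NormedSpace ℝ H]
  {P : ℝ → F} {p p' : ℝ → F} {Q q : ℝ → G} {a b : ℝ}

/-- `P` is a primitive of `p` on `s`: `P` is the indefinite integral of the integrable function `p`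
between points of `s`. On a compact interval this says that `P` is absolutely continuous with almost
everywhere derivative `p`; the integral form is chosen because it makes sense for functions with
values in a space without the Radon–Nikodym property. -/
structure IsPrimitiveOn (P p : ℝ → F) (s : Set ℝ) : Prop where
  integrableOn : IntegrableOn p s
  sub_eq_integral : ∀ x ∈ s, ∀ y ∈ s, P y - P x = ∫ z in x..y, p z

namespace IsPrimitiveOn

theorem mono {s t : Set ℝ} (h : IsPrimitiveOn P p t) (hst : s ⊆ t) : IsPrimitiveOn P p s :=
  ⟨h.integrableOn.mono_set hst, fun x hx y hy => h.sub_eq_integral x (hst hx) y (hst hy)⟩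

theorem intervalIntegrable {s : Set ℝ} [s.OrdConnected] (h : IsPrimitiveOn P p s) {x y : ℝ}
    (hx : x ∈ s) (hy : y ∈ s) : IntervalIntegrable p volume x y :=
  intervalIntegrable_iff.2 <|
    h.integrableOn.mono_set (uIoc_subset_uIcc.trans (OrdConnected.uIcc_subset ‹_› hx hy))

theorem congr_ae {s : Set ℝ} [hs : s.OrdConnected] (h : IsPrimitiveOn P p s)
    (hp : ∀ᵐ x, x ∈ s → p x = p' x) : IsPrimitiveOn P p' s where
  integrableOn := h.integrableOn.congr ((ae_restrict_iff' hs.measurableSet).2 hp)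
  sub_eq_integral x hx y hy := by
    rw [h.sub_eq_integral x hx y hy]
    refine integral_congr_ae ?_
    filter_upwards [hp] with z hz hzxy using hz (hs.uIcc_subset hx hy (uIoc_subset_uIcc hzxy))

theorem norm_sub_le (h : IsPrimitiveOn P p (Icc a b)) {x y : ℝ} (hx : x ∈ Icc a b)
    (hy : y ∈ Icc a b) (hxy : x ≤ y) : ‖P y - P x‖ ≤ ∫ z in x..y, ‖p z‖ :=
  h.sub_eq_integral x hx y hy ▸ norm_integral_le_integral_norm hxy

theorem norm_sub_le_mul (h : IsPrimitiveOn P p (Icc a b)) {M : ℝ}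
    (hM : ∀ᵐ x, x ∈ Icc a b → ‖p x‖ ≤ M) {x y : ℝ} (hx : x ∈ Icc a b) (hy : y ∈ Icc a b) :
    ‖P y - P x‖ ≤ M * |y - x| := by
  rw [h.sub_eq_integral x hx y hy]
  refine norm_integral_le_of_norm_le_const_ae ?_
  filter_upwards [hM] with z hz hzxy
  exact hz (ordConnected_Icc.uIcc_subset hx hy (uIoc_subset_uIcc hzxy))

theorem continuousOn (h : IsPrimitiveOn P p (Icc a b)) : ContinuousOn P (Icc a b) := by
  rcases lt_or_ge b a with hba | hab
  · simp [Icc_eq_empty hba.not_ge]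
  have ha : a ∈ Icc a b := left_mem_Icc.2 hab
  have hcont : ContinuousOn (fun x => P a + ∫ z in a..x, p z) (Icc a b) :=
    continuousOn_const.add <| uIcc_of_le hab ▸
      continuousOn_primitive_interval (uIcc_of_le hab ▸ h.integrableOn)
  exact hcont.congr fun x hx => eq_add_of_sub_eq' (h.sub_eq_integral a ha x hx)

theorem ae_hasDerivAt [CompleteSpace F] (h : IsPrimitiveOn P p (Icc a b)) :
    ∀ᵐ x, x ∈ Icc a b → HasDerivAt P (p x) x := by
  rcases lt_or_ge b a with hba | hab
  · simp [Icc_eq_empty hba.not_ge]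
  have ha : a ∈ Icc a b := left_mem_Icc.2 hab
  filter_upwards [(h.intervalIntegrable ha (right_mem_Icc.2 hab)).ae_hasDerivAt_integral,
    Measure.ae_ne volume a, Measure.ae_ne volume b] with x hx hxa hxb hxI
  rw [uIcc_of_le hab] at hx
  refine ((hx hxI a ha).const_add (P a)).congr_of_eventuallyEq ?_
  filter_upwards [Icc_mem_nhds (hxI.1.lt_of_ne' hxa) (hxI.2.lt_of_ne hxb)] with y hy
  exact eq_add_of_sub_eq' (h.sub_eq_integral a ha y hy)

theorem eq_of_ae_eq_zero (h : IsPrimitiveOn P p (Icc a b)) (hp : ∀ᵐ x, x ∈ Icc a b → p x = 0)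
    {x y : ℝ} (hx : x ∈ Icc a b) (hy : y ∈ Icc a b) : P x = P y := by
  have := h.norm_sub_le_mul (M := 0) (by simpa using hp) hy hx
  simpa [sub_eq_zero] using this

end IsPrimitiveOn

theorem isPrimitiveOn_of_eq_add_integral {v : F} (hp : IntegrableOn p (Icc a b))
    (hP : ∀ x ∈ Icc a b, P x = v + ∫ z in a..x, p z) : IsPrimitiveOn P p (Icc a b) where
  integrableOn := hp
  sub_eq_integral x hx y hy := by
    have hint : ∀ z ∈ Icc a b, IntervalIntegrable p volume a z := fun z hz =>
      (intervalIntegrable_iff_integrableOn_Icc_of_le hz.1).2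
        (hp.mono_set (Icc_subset_Icc_right hz.2))
    rw [hP x hx, hP y hy, add_sub_add_left_eq_sub,
      integral_interval_sub_left (hint y hy) (hint x hx)]

theorem isPrimitiveOn_integral (hp : IntegrableOn p (Icc a b)) :
    IsPrimitiveOn (fun x => ∫ z in a..x, p z) p (Icc a b) :=
  isPrimitiveOn_of_eq_add_integral (v := 0) hp fun _ _ => (zero_add _).symm

theorem absolutelyContinuousOnInterval_of_dist_le {X Y : Type*} [PseudoMetricSpace X]
    [PseudoMetricSpace Y] {f : ℝ → X} {h : ℝ → Y}
    (hfh : ∀ x ∈ uIcc a b, ∀ y ∈ uIcc a b, dist (f x) (f y) ≤ dist (h x) (h y))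
    (hh : AbsolutelyContinuousOnInterval h a b) : AbsolutelyContinuousOnInterval f a b :=
  squeeze_zero' (Eventually.of_forall fun _ => Finset.sum_nonneg fun _ _ => dist_nonneg)
    (eventually_inf_principal.2 <| Eventually.of_forall fun _ hE =>
      Finset.sum_le_sum fun i hi => hfh _ (hE.1 i hi).1 _ (hE.1 i hi).2) hh

theorem absolutelyContinuousOnInterval_of_dist_le_integral {X : Type*} [PseudoMetricSpace X]
    {f : ℝ → X} {k : ℝ → ℝ} (hab : a ≤ b) (hk : IntegrableOn k (Icc a b))
    (hf : ∀ x ∈ Icc a b, ∀ y ∈ Icc a b, x ≤ y → dist (f x) (f y) ≤ ∫ z in x..y, k z) :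
    AbsolutelyContinuousOnInterval f a b := by
  have hprim := isPrimitiveOn_integral hk
  refine absolutelyContinuousOnInterval_of_dist_le (h := fun x => ∫ z in a..x, k z) ?_ <|
    (hprim.intervalIntegrable (left_mem_Icc.2 hab) (right_mem_Icc.2 hab)
      ).absolutelyContinuousOnInterval_intervalIntegral left_mem_uIcc
  rw [uIcc_of_le hab]
  intro x hx y hy
  wlog hxy : x ≤ y generalizing x y
  · simpa only [dist_comm] using this y hy x hx (le_of_not_ge hxy)
  rw [dist_comm (∫ z in a..x, k z), Real.dist_eq, hprim.sub_eq_integral x hx y hy]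
  exact (hf x hx y hy hxy).trans (le_abs_self _)

theorem ae_norm_le_of_dist_le_integral {k : ℝ → ℝ} (hk : IntegrableOn k (Icc a b))
    (hP : ∀ x ∈ Icc a b, ∀ y ∈ Icc a b, x ≤ y → dist (P x) (P y) ≤ ∫ z in x..y, k z)
    (hp : ∀ᵐ x, x ∈ Icc a b → HasDerivAt P (p x) x) : ∀ᵐ x, x ∈ Icc a b → ‖p x‖ ≤ k x := by
  have hprim := isPrimitiveOn_integral hk
  filter_upwards [hp, hprim.ae_hasDerivAt, Measure.ae_ne volume b] with x hPx hBx hxb hx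
  refine le_of_tendsto_of_tendsto
    ((hasDerivAt_iff_tendsto_slope.1 (hPx hx)).mono_left (nhdsGT_le_nhdsNE x)).norm
    ((hasDerivAt_iff_tendsto_slope.1 (hBx hx)).mono_left (nhdsGT_le_nhdsNE x)) ?_
  filter_upwards [Ioo_mem_nhdsGT (hx.2.lt_of_ne hxb)] with y hy
  have hyI : y ∈ Icc a b := ⟨hx.1.trans hy.1.le, hy.2.le⟩
  have hxy : 0 < y - x := sub_pos.2 hy.1
  rw [slope_def_module, slope_def_module, norm_smul, norm_inv, Real.norm_of_nonneg hxy.le,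
    smul_eq_mul, hprim.sub_eq_integral x hx y hyI]
  gcongr
  exact dist_eq_norm' (P x) _ ▸ hP x hx y hyI hy.1.le

theorem isPrimitiveOn_of_dist_le_integral [CompleteSpace F] {k : ℝ → ℝ}
    (hk : IntegrableOn k (Icc a b))
    (hP : ∀ x ∈ Icc a b, ∀ y ∈ Icc a b, x ≤ y → dist (P x) (P y) ≤ ∫ z in x..y, k z)
    (hp : ∀ᵐ x, x ∈ Icc a b → HasDerivAt P (p x) x) : IsPrimitiveOn P p (Icc a b) := by
  have hpint : IntegrableOn p (Icc a b) := by
    refine Integrable.mono' hk ?_ <|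
      (ae_restrict_iff' measurableSet_Icc).2 (ae_norm_le_of_dist_le_integral hk hP hp)
    refine (aestronglyMeasurable_deriv P _).congr <| (ae_restrict_iff' measurableSet_Icc).2 ?_
    filter_upwards [hp] with x hx hxI using (hx hxI).deriv
  rcases lt_or_ge b a with hba | hab
  · exact ⟨hpint, by simp [Icc_eq_empty hba.not_ge]⟩
  have hprim := isPrimitiveOn_integral hpint
  obtain ⟨C, hC⟩ : ∃ C, ∀ x ∈ uIcc a b, P x - ∫ z in a..x, p z = C := by
    refine ((absolutelyContinuousOnInterval_of_dist_le_integral hab hk hP).sub <|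
      absolutelyContinuousOnInterval_of_dist_le_integral hab hpint.norm
        fun x hx y hy hxy =>
          (dist_eq_norm' _ _).trans_le (hprim.norm_sub_le hx hy hxy)).const_of_ae_hasDerivAt_zero ?_
    filter_upwards [hp, hprim.ae_hasDerivAt] with x hPx hIx hx
    rw [uIcc_of_le hab] at hx
    simpa using (hPx hx).sub (hIx hx)
  rw [uIcc_of_le hab] at hC
  exact isPrimitiveOn_of_eq_add_integral hpint fun x hx => sub_eq_iff_eq_add.1 (hC x hx)

theorem integrableOn_bilin (L : F →L[ℝ] G →L[ℝ] H) (hp : IntegrableOn p (Icc a b))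
    (hQ : ContinuousOn Q (Icc a b)) : IntegrableOn (fun x => L (p x) (Q x)) (Icc a b) := by
  obtain ⟨C, hC⟩ := isCompact_Icc.exists_bound_of_continuousOn hQ
  exact ContinuousLinearMap.integrable_of_bilin_of_bdd_right L C hp
    (hQ.aestronglyMeasurable measurableSet_Icc) (ae_restrict_of_forall_mem measurableSet_Icc hC)

namespace IsPrimitiveOn

variable [CompleteSpace F] [CompleteSpace G] [CompleteSpace H]

theorem bilin (L : F →L[ℝ] G →L[ℝ] H) (hP : IsPrimitiveOn P p (Icc a b))
    (hQ : IsPrimitiveOn Q q (Icc a b)) :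
    IsPrimitiveOn (fun x => L (P x) (Q x)) (fun x => L (P x) (q x) + L (p x) (Q x)) (Icc a b) := by
  obtain ⟨C, hC⟩ := isCompact_Icc.exists_bound_of_continuousOn hP.continuousOn
  obtain ⟨D, hD⟩ := isCompact_Icc.exists_bound_of_continuousOn hQ.continuousOn
  have hq : IntegrableOn (fun x => C * ‖q x‖) (Icc a b) := hQ.integrableOn.norm.const_mul C
  have hp : IntegrableOn (fun x => D * ‖p x‖) (Icc a b) := hP.integrableOn.norm.const_mul D
  refine isPrimitiveOn_of_dist_le_integral (k := fun x => ‖L‖ * (C * ‖q x‖ + D * ‖p x‖))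
    ((hq.add hp).const_mul ‖L‖) (fun x hx y hy hxy => ?_) ?_
  · have hC₀ : 0 ≤ C := (norm_nonneg _).trans (hC x hx)
    have hp₀ : 0 ≤ ∫ z in x..y, ‖p z‖ := integral_nonneg hxy fun _ _ => norm_nonneg _
    calc dist (L (P x) (Q x)) (L (P y) (Q y))
        = ‖L (P y) (Q y - Q x) + L (P y - P x) (Q x)‖ := by
          rw [dist_eq_norm']; congr 1; simp only [map_sub, sub_apply]; abel
      _ ≤ ‖L‖ * ‖P y‖ * ‖Q y - Q x‖ + ‖L‖ * ‖P y - P x‖ * ‖Q x‖ :=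
          norm_add_le_of_le (L.le_opNorm₂ _ _) (L.le_opNorm₂ _ _)
      _ ≤ ‖L‖ * C * (∫ z in x..y, ‖q z‖) + ‖L‖ * (∫ z in x..y, ‖p z‖) * D := by
          gcongr
          exacts [hC y hy, hQ.norm_sub_le hx hy hxy, hP.norm_sub_le hx hy hxy, hD x hx]
      _ = ∫ z in x..y, ‖L‖ * (C * ‖q z‖ + D * ‖p z‖) := by
          rw [intervalIntegral.integral_const_mul, intervalIntegral.integral_add,
            intervalIntegral.integral_const_mul, intervalIntegral.integral_const_mul]
          · ring
          · exact (hQ.intervalIntegrable hx hy).norm.const_mul C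
          · exact (hP.intervalIntegrable hx hy).norm.const_mul D
  · filter_upwards [hP.ae_hasDerivAt, hQ.ae_hasDerivAt] with x hPx hQx hx
    exact L.hasDerivAt_of_bilinear (fun _ => hPx hx) (fun _ => hQx hx)

theorem mul {B : Type*} [NormedRing B] [NormedAlgebra ℝ B] [CompleteSpace B] {P p Q q : ℝ → B}
    (hP : IsPrimitiveOn P p (Icc a b)) (hQ : IsPrimitiveOn Q q (Icc a b)) :
    IsPrimitiveOn (fun x => P x * Q x) (fun x => P x * q x + p x * Q x) (Icc a b) :=
  hP.bilin (ContinuousLinearMap.mul ℝ B) hQ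

theorem pow_div_factorial {h k : ℝ → ℝ} (hh : IsPrimitiveOn h k (Icc a b)) (n : ℕ) :
    IsPrimitiveOn (fun x => h x ^ (n + 1) / (n + 1)!) (fun x => k x * (h x ^ n / n !))
      (Icc a b) := by
  induction n with
  | zero => simpa using hh
  | succ n ih =>
    have hmul := (hh.mul ih).bilin (ContinuousLinearMap.mul ℝ ℝ)
      (Q := fun _ => ((n : ℝ) + 2)⁻¹) (q := fun _ => 0) ⟨integrableOn_zero, by simp⟩
    convert hmul using 2 with x x
    · simp only [ContinuousLinearMap.mul_apply', Nat.factorial_succ (n + 1)]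
      push_cast
      field_simp
      ring
    · simp only [ContinuousLinearMap.mul_apply', Nat.factorial_succ n]
      push_cast
      field_simp
      ring

end IsPrimitiveOn

section NullPullback

variable {V : Type*} [NormedAddCommGroup V] [NormedSpace ℝ V] [FiniteDimensional ℝ V]
  [MeasurableSpace V] [BorelSpace V] {μ : Measure V} [μ.IsAddHaarMeasure] {s : Set V}
  {f : V → V}

theorem exists_approximatesLinearOn_imp_measure_eq_zero (T : V →L[ℝ] V) (hT : T.det ≠ 0) :
    ∃ δ : NNReal, δ ≠ 0 ∧ ∀ s : Set V, ApproximatesLinearOn f T s δ → μ (f '' s) = 0 → μ s = 0 := by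
  obtain ⟨m, hm₀, hm⟩ := ENNReal.lt_iff_exists_nnreal_btwn.1
    (ENNReal.ofReal_pos.2 (abs_pos.2 hT))
  obtain ⟨δ, hδ, hδ₀⟩ := ((mul_le_addHaar_image_of_lt_det μ T hm).and self_mem_nhdsWithin).exists
  refine ⟨δ, ne_of_gt hδ₀, fun s hs hzero => ?_⟩
  have hle := hδ s f hs
  rw [hzero, nonpos_iff_eq_zero, mul_eq_zero] at hle
  exact hle.resolve_left hm₀.ne'

theorem measure_eq_zero_of_measure_image_eq_zero {f' : V → V →L[ℝ] V}
    (hf : ∀ x ∈ s, HasFDerivWithinAt f (f' x) s x) (hdet : ∀ x ∈ s, (f' x).det ≠ 0)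
    (himage : μ (f '' s) = 0) : μ s = 0 := by
  rcases s.eq_empty_or_nonempty with rfl | hs
  · exact measure_empty
  have hδ : ∀ T : V →L[ℝ] V, ∃ δ : NNReal, δ ≠ 0 ∧ (T.det ≠ 0 → ∀ u : Set V,
      ApproximatesLinearOn f T u δ → μ (f '' u) = 0 → μ u = 0) := fun T => by
    by_cases hT : T.det = 0
    · exact ⟨1, one_ne_zero, fun h => (h hT).elim⟩
    · obtain ⟨δ, hδ₀, hδ⟩ := exists_approximatesLinearOn_imp_measure_eq_zero (μ := μ) (f := f) T hT
      exact ⟨δ, hδ₀, fun _ => hδ⟩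
  choose δ hδ₀ hδ using hδ
  obtain ⟨t, T, -, -, hcover, happrox, hT⟩ :=
    exists_partition_approximatesLinearOn_of_hasFDerivWithinAt f s f' hf δ hδ₀
  refine measure_mono_null ((subset_inter subset_rfl hcover).trans (inter_iUnion s t).subset)
    (measure_iUnion_null fun n => hδ (T n) ?_ _ (happrox n)
      (measure_mono_null (image_mono inter_subset_left) himage))
  obtain ⟨y, hy, hTy⟩ := hT hs n
  exact hTy ▸ hdet y hy

end NullPullback

theorem ae_comp_of_ae_of_hasDerivAt {f f' : ℝ → ℝ} {s : Set ℝ} {r : ℝ → Prop} (hr : ∀ᵐ y, r y)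
    (hf : ∀ᵐ t, t ∈ s → HasDerivAt f (f' t) t) : ∀ᵐ t, t ∈ s → f' t ≠ 0 → r (f t) := by
  have hnull : volume {t | HasDerivAt f (f' t) t ∧ f' t ≠ 0 ∧ ¬ r (f t)} = 0 := by
    refine measure_eq_zero_of_measure_image_eq_zero (f := f)
      (fun t ht => ht.1.hasFDerivAt.hasFDerivWithinAt) (fun t ht => ?_) (measure_mono_null ?_ hr)
    · simpa [ContinuousLinearMap.det] using ht.2.1
    · rintro _ ⟨t, ht, rfl⟩
      exact ht.2.2
  filter_upwards [hf, compl_mem_ae_iff.2 hnull] with t htf ht hts hne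
  by_contra hrt
  exact ht ⟨htf hts, hne, hrt⟩

theorem hasDerivAt_zero_of_norm_sub_le_mul {f : ℝ → ℝ} {t M : ℝ} (hf : HasDerivAt f 0 t)
    (hP : ∀ᶠ s in 𝓝 t, ‖P s - P t‖ ≤ M * |f s - f t|) : HasDerivAt P 0 t := by
  rw [hasDerivAt_iff_isLittleO] at hf ⊢
  simp only [smul_zero, sub_zero] at hf ⊢
  exact (Asymptotics.IsBigO.of_bound M hP).trans_isLittleO hf

namespace IsPrimitiveOn

/-- Where `f` has derivative zero, `P ∘ f` has derivative zero because `P` is Lipschitz; elsewhere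
`f` meets the null set on which `P` fails to have derivative `p` only in a null set. -/
theorem comp [CompleteSpace F] {f f' : ℝ → ℝ} {c d M : ℝ} (hP : IsPrimitiveOn P p (Icc c d))
    (hM : ∀ᵐ x, x ∈ Icc c d → ‖p x‖ ≤ M) (hf : IsPrimitiveOn f f' (Icc a b))
    (hfc : MapsTo f (Icc a b) (Icc c d)) :
    IsPrimitiveOn (fun t => P (f t)) (fun t => f' t • p (f t)) (Icc a b) := by
  have hlip : ∀ s ∈ Icc a b, ∀ t ∈ Icc a b, ‖P (f s) - P (f t)‖ ≤ |M| * |f s - f t| :=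
    fun s hs t ht => (hP.norm_sub_le_mul hM (hfc ht) (hfc hs)).trans <|
      mul_le_mul_of_nonneg_right (le_abs_self M) (abs_nonneg _)
  refine isPrimitiveOn_of_dist_le_integral (k := fun t => |M| * ‖f' t‖)
    (hf.integrableOn.norm.const_mul _) (fun x hx y hy hxy => ?_) ?_
  · rw [intervalIntegral.integral_const_mul, dist_eq_norm']
    refine (hlip y hy x hx).trans ?_
    gcongr
    exact hf.norm_sub_le hx hy hxy
  · filter_upwards [ae_comp_of_ae_of_hasDerivAt hP.ae_hasDerivAt hf.ae_hasDerivAt,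
      hf.ae_hasDerivAt, Measure.ae_ne volume a, Measure.ae_ne volume b] with t hPt hft hta htb ht
    by_cases hzero : f' t = 0
    · rw [hzero, zero_smul]
      refine hasDerivAt_zero_of_norm_sub_le_mul (M := |M|) (hzero ▸ hft ht) ?_
      filter_upwards [Icc_mem_nhds (ht.1.lt_of_ne' hta) (ht.2.lt_of_ne htb)] with s hs
      exact hlip s hs t ht
    · exact (hPt ht hzero (hfc ht)).scomp t (hft ht)

end IsPrimitiveOn

end Primitive

theorem intervalIntegral_le_setIntegral_Icc {h : ℝ → ℝ} {c d x : ℝ}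
    (hh : IntegrableOn h (Icc c d)) (hh₀ : 0 ≤ h) (hx : x ∈ Icc c d) :
    ∫ y in c..x, h y ≤ ∫ y in Icc c d, h y := by
  rw [integral_of_le hx.1]
  exact setIntegral_mono_set hh (Eventually.of_forall hh₀)
    (Eventually.of_forall (Ioc_subset_Icc_self.trans (Icc_subset_Icc_right hx.2)))

section LinearODE

variable {F : Type*} [NormedAddCommGroup F] [NormedSpace ℝ F]
  {T : ℝ → F →L[ℝ] F} {c d : ℝ} {v : F}

/-- The `k`-th term of the Picard series for the linear equation `z' = T z`, `z c = v`; the series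
sums to the solution. -/
noncomputable def picardTerm (T : ℝ → F →L[ℝ] F) (c : ℝ) (v : F) : ℕ → ℝ → F
  | 0, _ => v
  | k + 1, x => ∫ y in c..x, T y (picardTerm T c v k y)

theorem continuousOn_picardTerm (hT : IntegrableOn T (Icc c d)) (k : ℕ) :
    ContinuousOn (picardTerm T c v k) (Icc c d) := by
  induction k with
  | zero => exact continuousOn_const
  | succ k ih =>
    exact (isPrimitiveOn_integral (integrableOn_bilin (.id ℝ (F →L[ℝ] F)) hT ih)).continuousOn

theorem norm_picardTerm_le (hT : IntegrableOn T (Icc c d)) (k : ℕ) {x : ℝ} (hx : x ∈ Icc c d) :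
    ‖picardTerm T c v k x‖ ≤ (∫ y in c..x, ‖T y‖) ^ k / k ! * ‖v‖ := by
  induction k generalizing x with
  | zero => simp [picardTerm]
  | succ k ih =>
    have hc : c ∈ Icc c d := left_mem_Icc.2 (hx.1.trans hx.2)
    have hpow := (isPrimitiveOn_integral hT.norm).pow_div_factorial k
    have hnorm : ∀ y ∈ Ioc c x, ‖T y (picardTerm T c v k y)‖ ≤
        ‖T y‖ * ((∫ z in c..y, ‖T z‖) ^ k / k !) * ‖v‖ := fun y hy => by
      rw [mul_assoc]
      exact (T y).le_opNorm_of_le (ih ⟨hy.1.le, hy.2.trans hx.2⟩)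
    calc ‖picardTerm T c v (k + 1) x‖
        ≤ ∫ y in c..x, ‖T y‖ * ((∫ z in c..y, ‖T z‖) ^ k / k !) * ‖v‖ :=
          norm_integral_le_of_norm_le hx.1 (Eventually.of_forall hnorm)
            ((hpow.intervalIntegrable hc hx).mul_const _)
      _ = (∫ y in c..x, ‖T y‖) ^ (k + 1) / (k + 1)! * ‖v‖ := by
          rw [intervalIntegral.integral_mul_const, ← hpow.sub_eq_integral c hc x hx]
          simp

theorem norm_picardTerm_le_of_mem (hT : IntegrableOn T (Icc c d)) (k : ℕ) {x : ℝ}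
    (hx : x ∈ Icc c d) :
    ‖picardTerm T c v k x‖ ≤ (∫ y in Icc c d, ‖T y‖) ^ k / k ! * ‖v‖ := by
  have hle : ∫ y in c..x, ‖T y‖ ≤ ∫ y in Icc c d, ‖T y‖ :=
    intervalIntegral_le_setIntegral_Icc hT.norm (fun _ => norm_nonneg _) hx
  have hnonneg : 0 ≤ ∫ y in c..x, ‖T y‖ := integral_nonneg hx.1 fun _ _ => norm_nonneg _
  exact (norm_picardTerm_le hT k hx).trans (by gcongr)

theorem hasSum_pow_div_factorial_mul (r s : ℝ) :
    HasSum (fun k : ℕ => r ^ k / k ! * s) (Real.exp r * s) := by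
  rw [Real.exp_eq_exp_ℝ]
  exact (NormedSpace.expSeries_div_hasSum_exp r).mul_right s

variable [CompleteSpace F]

theorem hasSum_picardTerm (hT : IntegrableOn T (Icc c d)) {x : ℝ} (hx : x ∈ Icc c d) :
    HasSum (fun k => picardTerm T c v k x) (∑' k, picardTerm T c v k x) :=
  (Summable.of_norm_bounded (hasSum_pow_div_factorial_mul _ _).summable
    fun k => norm_picardTerm_le_of_mem hT k hx).hasSum

theorem tsum_picardTerm_eq_add_integral (hT : IntegrableOn T (Icc c d)) {x : ℝ}
    (hx : x ∈ Icc c d) :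
    ∑' k, picardTerm T c v k x = v + ∫ y in c..x, T y (∑' k, picardTerm T c v k y) := by
  have hint : HasSum (fun k => picardTerm T c v (k + 1) x)
      (∫ y in c..x, T y (∑' k, picardTerm T c v k y)) := by
    have hsub : uIoc c x ⊆ Icc c d := by
      rw [uIoc_of_le hx.1]
      exact Ioc_subset_Icc_self.trans (Icc_subset_Icc_right hx.2)
    have hexp := hasSum_pow_div_factorial_mul (∫ y in Icc c d, ‖T y‖) ‖v‖
    refine hasSum_integral_of_dominated_convergence
      (fun k y => ‖T y‖ * ((∫ y in Icc c d, ‖T y‖) ^ k / k ! * ‖v‖)) (fun k => ?_)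
      (fun k => ?_) ?_ ?_ ?_
    · exact (integrableOn_bilin (.id ℝ (F →L[ℝ] F)) hT
        (continuousOn_picardTerm hT k)).aestronglyMeasurable.mono_measure
        (Measure.restrict_mono hsub le_rfl)
    · exact Eventually.of_forall fun y hy =>
        (T y).le_opNorm_of_le (norm_picardTerm_le_of_mem hT k (hsub hy))
    · exact Eventually.of_forall fun y _ => hexp.summable.mul_left _
    · simp only [tsum_mul_left, hexp.tsum_eq]
      exact (intervalIntegrable_iff.2 (hT.mono_set hsub)).norm.mul_const _
    · exact Eventually.of_forall fun y hy => (T y).hasSum (hasSum_picardTerm hT (hsub hy))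
  exact (HasSum.zero_add (f := fun k => picardTerm T c v k x) hint).tsum_eq

theorem exists_isPrimitiveOn_apply (hT : IntegrableOn T (Icc c d)) (v : F) :
    ∃ z : ℝ → F, z c = v ∧ IsPrimitiveOn z (fun x => T x (z x)) (Icc c d) ∧
      ∀ x ∈ Icc c d, ‖z x‖ ≤ Real.exp (∫ y in Icc c d, ‖T y‖) * ‖v‖ := by
  have hexp := hasSum_pow_div_factorial_mul (∫ y in Icc c d, ‖T y‖) ‖v‖
  have hcont : ContinuousOn (fun x => ∑' k, picardTerm T c v k x) (Icc c d) :=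
    continuousOn_tsum (fun k => continuousOn_picardTerm hT k) hexp.summable
      fun k x hx => norm_picardTerm_le_of_mem hT k hx
  refine ⟨fun x => ∑' k, picardTerm T c v k x, ?_, ?_, ?_⟩
  · refine tsum_eq_single 0 fun k hk => ?_
    obtain ⟨k, rfl⟩ := Nat.exists_eq_succ_of_ne_zero hk
    exact integral_same
  · exact isPrimitiveOn_of_eq_add_integral (integrableOn_bilin (.id ℝ (F →L[ℝ] F)) hT hcont)
      fun x hx => tsum_picardTerm_eq_add_integral hT hx
  · exact fun x hx => tsum_of_norm_bounded hexp fun k => norm_picardTerm_le_of_mem hT k hx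

theorem exists_isPrimitiveOn_bilin {G : Type*} [NormedAddCommGroup G] [NormedSpace ℝ G]
    (L : G →L[ℝ] F →L[ℝ] F) (hL : ‖L‖ ≤ 1) {g : ℝ → G} (hg : IntegrableOn g (Icc c d)) (v : F) :
    ∃ z : ℝ → F, z c = v ∧ IsPrimitiveOn z (fun x => L (g x) (z x)) (Icc c d) ∧
      ∀ x ∈ Icc c d, ‖z x‖ ≤ Real.exp (∫ y in Icc c d, ‖g y‖) * ‖v‖ := by
  have hLg : IntegrableOn (fun x => L (g x)) (Icc c d) := L.integrable_comp hg
  obtain ⟨z, hzc, hz, hzle⟩ := exists_isPrimitiveOn_apply hLg v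
  have hint : ∫ y in Icc c d, ‖L (g y)‖ ≤ ∫ y in Icc c d, ‖g y‖ :=
    integral_mono hLg.norm hg.norm fun y => by simpa using L.le_of_opNorm_le hL (g y)
  exact ⟨z, hzc, hz, fun x hx => (hzle x hx).trans (by gcongr)⟩

end LinearODE

theorem eqOn_zero_of_isIdempotentElem {X R : Type*} [TopologicalSpace X] [NonUnitalNormedRing R]
    {s : Set X} (hs : IsPreconnected s) {e : X → R} (he : ContinuousOn e s)
    (hidem : ∀ x ∈ s, IsIdempotentElem (e x)) {c : X} (hc : c ∈ s) (hec : e c = 0) :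
    EqOn e 0 s := by
  have hsq : ∀ x ∈ s, ‖e x‖ ≤ ‖e x‖ * ‖e x‖ := fun x hx =>
    (congrArg norm (hidem x hx).eq).symm.trans_le (norm_mul_le _ _)
  intro x hx
  by_contra hne
  have hpos : 0 < ‖e x‖ := norm_pos_iff.2 hne
  have hone : 1 ≤ ‖e x‖ := by nlinarith [hsq x hx]
  obtain ⟨y, hy, hhalf⟩ := hs.intermediate_value hc hx he.norm
    (show (1 / 2 : ℝ) ∈ Icc ‖e c‖ ‖e x‖ by rw [hec, norm_zero]; constructor <;> linarith)
  have := hsq y hy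
  norm_num [hhalf] at this

section FundamentalPair

variable {B : Type*} [NormedRing B] [NormedAlgebra ℝ B] {g g₁ g₂ Φ Ψ Φ₁ Ψ₁ Φ₂ Ψ₂ : ℝ → B}
  {c d K : ℝ}

/-- `Φ` is the fundamental solution of `x' = g x` on `[c, d]` with `Φ c = 1`, and `Ψ` is its
inverse. The inverse is part of the data because it solves an equation of its own,
`Ψ' = -Ψ g`. -/
structure IsFundamentalPair (g Φ Ψ : ℝ → B) (c d : ℝ) : Prop where
  solution : IsPrimitiveOn Φ (fun x => g x * Φ x) (Icc c d)
  inverse : IsPrimitiveOn Ψ (fun x => -(Ψ x * g x)) (Icc c d)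
  solution_left : Φ c = 1
  inverse_left : Ψ c = 1
  mul_inverse : ∀ x ∈ Icc c d, Φ x * Ψ x = 1

theorem IsFundamentalPair.integrableOn (h : IsFundamentalPair g Φ Ψ c d) :
    IntegrableOn g (Icc c d) := by
  refine (integrableOn_bilin (ContinuousLinearMap.mul ℝ B) h.solution.integrableOn
    h.inverse.continuousOn).congr_fun (fun x hx => ?_) measurableSet_Icc
  simp [mul_assoc, h.mul_inverse x hx]

variable [CompleteSpace B]

theorem inverse_mul_solution_eq (hΦ : IsPrimitiveOn Φ (fun x => g x * Φ x) (Icc c d))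
    (hΨ : IsPrimitiveOn Ψ (fun x => -(Ψ x * g x)) (Icc c d)) {x : ℝ} (hx : x ∈ Icc c d) :
    Ψ x * Φ x = Ψ c * Φ c :=
  (hΨ.mul hΦ).eq_of_ae_eq_zero (Eventually.of_forall fun y _ => by noncomm_ring) hx
    (left_mem_Icc.2 (hx.1.trans hx.2))

theorem solution_mul_inverse_eq_one (hΦ : IsPrimitiveOn Φ (fun x => g x * Φ x) (Icc c d))
    (hΨ : IsPrimitiveOn Ψ (fun x => -(Ψ x * g x)) (Icc c d)) (hΦc : Φ c = 1) (hΨc : Ψ c = 1)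
    {x : ℝ} (hx : x ∈ Icc c d) : Φ x * Ψ x = 1 := by
  have hidem : ∀ y ∈ Icc c d, IsIdempotentElem (1 - Φ y * Ψ y) := fun y hy => by
    have hleft : Ψ y * Φ y = 1 := by simp [inverse_mul_solution_eq hΦ hΨ hy, hΦc, hΨc]
    refine IsIdempotentElem.one_sub ?_
    rw [IsIdempotentElem, mul_assoc, ← mul_assoc (Ψ y), hleft, one_mul]
  exact (sub_eq_zero.1 <| eqOn_zero_of_isIdempotentElem isPreconnected_Icc
    (continuousOn_const.sub (hΦ.continuousOn.mul hΨ.continuousOn)) hidem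
    (left_mem_Icc.2 (hx.1.trans hx.2)) (by simp [hΦc, hΨc]) hx).symm

theorem exists_isFundamentalPair (hg : IntegrableOn g (Icc c d)) :
    ∃ Φ Ψ : ℝ → B, IsFundamentalPair g Φ Ψ c d ∧
      (∀ x ∈ Icc c d, ‖Φ x‖ ≤ Real.exp (∫ y in Icc c d, ‖g y‖) * ‖(1 : B)‖) ∧
      ∀ x ∈ Icc c d, ‖Ψ x‖ ≤ Real.exp (∫ y in Icc c d, ‖g y‖) * ‖(1 : B)‖ := by
  obtain ⟨Φ, hΦc, hΦ, hΦle⟩ := exists_isPrimitiveOn_bilin (ContinuousLinearMap.mul ℝ B)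
    (ContinuousLinearMap.opNorm_mul_le ℝ B) hg 1
  obtain ⟨Ψ, hΨc, hΨ, hΨle⟩ := exists_isPrimitiveOn_bilin (-(ContinuousLinearMap.mul ℝ B).flip)
    ((norm_neg _).trans_le <| (ContinuousLinearMap.opNorm_flip _).trans_le <|
      ContinuousLinearMap.opNorm_mul_le ℝ B) hg 1
  exact ⟨Φ, Ψ, ⟨hΦ, hΨ, hΦc, hΨc, fun x hx => solution_mul_inverse_eq_one hΦ hΨ hΦc hΨc hx⟩,
    hΦle, hΨle⟩

namespace IsFundamentalPair

theorem norm_inverse_mul_solution_le (h₁ : IsFundamentalPair g₁ Φ₁ Ψ₁ c d)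
    (h₂ : IsFundamentalPair g₂ Φ₂ Ψ₂ c d) (hΦ : ∀ x ∈ Icc c d, ‖Φ₁ x‖ ≤ K)
    (hΨ : ∀ x ∈ Icc c d, ‖Ψ₂ x‖ ≤ K) {x : ℝ} (hx : x ∈ Icc c d) :
    ‖Ψ₂ x * Φ₁ x‖ ≤ ‖(1 : B)‖ + K ^ 2 * ∫ y in Icc c d, ‖g₂ y - g₁ y‖ := by
  have hc : c ∈ Icc c d := left_mem_Icc.2 (hx.1.trans hx.2)
  have hprod := h₂.inverse.mul h₁.solution
  have hint : IntegrableOn (fun y => ‖g₂ y - g₁ y‖) (Icc c d) :=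
    (h₂.integrableOn.sub h₁.integrableOn).norm
  have hderiv : ∀ y ∈ Icc c d,
      ‖Ψ₂ y * (g₁ y * Φ₁ y) + -(Ψ₂ y * g₂ y) * Φ₁ y‖ ≤ K ^ 2 * ‖g₂ y - g₁ y‖ := fun y hy => by
    have hK : 0 ≤ K := (norm_nonneg _).trans (hΦ y hy)
    calc ‖Ψ₂ y * (g₁ y * Φ₁ y) + -(Ψ₂ y * g₂ y) * Φ₁ y‖
        = ‖Ψ₂ y * (g₂ y - g₁ y) * Φ₁ y‖ := by rw [← norm_neg]; congr 1; noncomm_ring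
      _ ≤ ‖Ψ₂ y‖ * ‖g₂ y - g₁ y‖ * ‖Φ₁ y‖ := norm_mul₃_le
      _ ≤ K * ‖g₂ y - g₁ y‖ * K := by
          gcongr
          exacts [hΨ y hy, hΦ y hy]
      _ = K ^ 2 * ‖g₂ y - g₁ y‖ := by ring
  calc ‖Ψ₂ x * Φ₁ x‖
      ≤ ‖Ψ₂ c * Φ₁ c‖ + ‖Ψ₂ x * Φ₁ x - Ψ₂ c * Φ₁ c‖ := norm_le_norm_add_norm_sub' _ _
    _ ≤ ‖(1 : B)‖ + ∫ y in c..x, ‖Ψ₂ y * (g₁ y * Φ₁ y) + -(Ψ₂ y * g₂ y) * Φ₁ y‖ :=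
        add_le_add (by simp [h₂.inverse_left, h₁.solution_left]) (hprod.norm_sub_le hc hx hx.1)
    _ ≤ ‖(1 : B)‖ + ∫ y in Icc c d, ‖Ψ₂ y * (g₁ y * Φ₁ y) + -(Ψ₂ y * g₂ y) * Φ₁ y‖ :=
        add_le_add_right (intervalIntegral_le_setIntegral_Icc hprod.integrableOn.norm
          (fun _ => norm_nonneg _) hx) _
    _ ≤ ‖(1 : B)‖ + K ^ 2 * ∫ y in Icc c d, ‖g₂ y - g₁ y‖ := by
        rw [← MeasureTheory.integral_const_mul]
        exact add_le_add_right (setIntegral_mono_on hprod.integrableOn.norm (hint.const_mul _)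
          measurableSet_Icc hderiv) _

theorem norm_inverse_mul_le_exp_mul (hone : ‖(1 : B)‖ ≤ 1) (h₁ : IsFundamentalPair g₁ Φ₁ Ψ₁ c d)
    (h₂ : IsFundamentalPair g₂ Φ₂ Ψ₂ c d) (hΦ : ∀ x ∈ Icc c d, ‖Φ₁ x‖ ≤ K)
    (hΨ : ∀ x ∈ Icc c d, ‖Ψ₂ x‖ ≤ K) {x : ℝ} (hx : x ∈ Icc c d) (y : B) :
    ‖Ψ₂ x * y‖ ≤ Real.exp (K ^ 2 * ∫ z in Icc c d, ‖g₂ z - g₁ z‖) * ‖Ψ₁ x * y‖ := by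
  have hexp : ‖Ψ₂ x * Φ₁ x‖ ≤ Real.exp (K ^ 2 * ∫ z in Icc c d, ‖g₂ z - g₁ z‖) := by
    linarith [h₁.norm_inverse_mul_solution_le h₂ hΦ hΨ hx,
      Real.add_one_le_exp (K ^ 2 * ∫ z in Icc c d, ‖g₂ z - g₁ z‖)]
  calc ‖Ψ₂ x * y‖ = ‖(Ψ₂ x * Φ₁ x) * (Ψ₁ x * y)‖ := by
        rw [mul_assoc, ← mul_assoc (Φ₁ x), h₁.mul_inverse x hx, one_mul]
    _ ≤ _ := norm_mul_le_of_le hexp le_rfl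

theorem inverse_comp_mul_eq {f f' : ℝ → ℝ} {x : ℝ → B} {α β M : ℝ}
    (h : IsFundamentalPair g Φ Ψ c d) (hM : ∀ᵐ y, y ∈ Icc c d → ‖g y‖ ≤ M)
    (hf : IsPrimitiveOn f f' (Icc α β)) (hfc : MapsTo f (Icc α β) (Icc c d))
    (hx : IsPrimitiveOn x (fun t => f' t • g (f t) * x t) (Icc α β)) {s t : ℝ}
    (hs : s ∈ Icc α β) (ht : t ∈ Icc α β) : Ψ (f s) * x s = Ψ (f t) * x t := by
  obtain ⟨C, hC⟩ := isCompact_Icc.exists_bound_of_continuousOn h.inverse.continuousOn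
  have hbound : ∀ᵐ y, y ∈ Icc c d → ‖-(Ψ y * g y)‖ ≤ C * M := by
    filter_upwards [hM] with y hgy hy
    rw [norm_neg]
    exact norm_mul_le_of_le (hC y hy) (hgy hy)
  exact ((h.inverse.comp hbound hf hfc).mul hx).eq_of_ae_eq_zero
    (Eventually.of_forall fun r _ => by simp [mul_assoc]) hs ht

end IsFundamentalPair

end FundamentalPair

section Mesh

theorem mutual_le_exp_sum_Ioc_mul {q w : ℕ → ℝ} {n i j : ℕ}
    (hup : ∀ k, k + 1 < n → q (k + 1) ≤ Real.exp (w (k + 1)) * q k)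
    (hdown : ∀ k, k + 1 < n → q k ≤ Real.exp (w (k + 1)) * q (k + 1)) (hij : i ≤ j) (hj : j < n) :
    q j ≤ Real.exp (∑ k ∈ Finset.Ioc i j, w k) * q i ∧
      q i ≤ Real.exp (∑ k ∈ Finset.Ioc i j, w k) * q j := by
  induction j, hij using Nat.le_induction with
  | base => simp
  | succ j hij ih =>
    obtain ⟨ihup, ihdown⟩ := ih (Nat.lt_of_succ_lt hj)
    rw [Finset.sum_Ioc_succ_top hij, Real.exp_add]
    constructor
    · calc q (j + 1) ≤ Real.exp (w (j + 1)) * q j := hup j hj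
        _ ≤ Real.exp (w (j + 1)) * (Real.exp (∑ k ∈ Finset.Ioc i j, w k) * q i) := by gcongr
        _ = _ := by ring
    · calc q i ≤ Real.exp (∑ k ∈ Finset.Ioc i j, w k) * q j := ihdown
        _ ≤ Real.exp (∑ k ∈ Finset.Ioc i j, w k) * (Real.exp (w (j + 1)) * q (j + 1)) := by
            gcongr
            exact hdown j hj
        _ = _ := by ring

theorem le_exp_sum_Ico_mul {q w : ℕ → ℝ} {n i j : ℕ} (hq : ∀ k, 0 ≤ q k) (hw : ∀ k, 0 ≤ w k)
    (hup : ∀ k, k + 1 < n → q (k + 1) ≤ Real.exp (w (k + 1)) * q k)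
    (hdown : ∀ k, k + 1 < n → q k ≤ Real.exp (w (k + 1)) * q (k + 1)) (hi : i < n) (hj : j < n) :
    q j ≤ Real.exp (∑ k ∈ Finset.Ico 1 n, w k) * q i := by
  have hexp : ∀ {l m}, m < n → Real.exp (∑ k ∈ Finset.Ioc l m, w k) * q i ≤
      Real.exp (∑ k ∈ Finset.Ico 1 n, w k) * q i := fun {l m} hm => by
    have hsub : Finset.Ioc l m ⊆ Finset.Ico 1 n := fun k hk => by
      simp only [Finset.mem_Ioc, Finset.mem_Ico] at hk ⊢
      omega
    refine mul_le_mul_of_nonneg_right (Real.exp_le_exp.2 ?_) (hq i)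
    exact Finset.sum_le_sum_of_subset_of_nonneg hsub fun k _ _ => hw k
  rcases le_total i j with hij | hji
  · exact (mutual_le_exp_sum_Ioc_mul hup hdown hij hj).1.trans (hexp hj)
  · exact (mutual_le_exp_sum_Ioc_mul hup hdown hji hi).2.trans (hexp hi)

theorem exists_mem_Icc_succ {α : Type*} [LinearOrder α] {a : ℕ → α} {n : ℕ} (hn : n ≠ 0) {t : α}
    (ht : t ∈ Icc (a 0) (a n)) : ∃ i < n, t ∈ Icc (a i) (a (i + 1)) := by
  induction n with
  | zero => exact absurd rfl hn
  | succ n ih =>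
    rcases le_or_gt (a n) t with hle | hlt
    · exact ⟨n, n.lt_succ_self, hle, ht.2⟩
    · have hn₀ : n ≠ 0 := by
        rintro rfl
        exact hlt.not_ge ht.1
      obtain ⟨i, hi, hti⟩ := ih hn₀ ⟨ht.1, hlt.le⟩
      exact ⟨i, hi.trans n.lt_succ_self, hti⟩

theorem monotoneOn_Iic_of_le_succ {α : Type*} [Preorder α] {a : ℕ → α} {n : ℕ}
    (ha : ∀ i < n, a i ≤ a (i + 1)) : MonotoneOn a (Iic n) :=
  monotoneOn_of_le_add_one ordConnected_Iic fun i _ _ hi => ha i (Nat.lt_of_succ_le hi)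

theorem Icc_succ_subset_Icc {α : Type*} [Preorder α] {a : ℕ → α} {n i : ℕ}
    (ha : ∀ i < n, a i ≤ a (i + 1)) (hi : i < n) : Icc (a i) (a (i + 1)) ⊆ Icc (a 0) (a n) :=
  Icc_subset_Icc (monotoneOn_Iic_of_le_succ ha (Nat.zero_le n) hi.le (Nat.zero_le i))
    (monotoneOn_Iic_of_le_succ ha hi self_mem_Iic hi)

theorem integrableOn_Icc_of_succ {F : Type*} [NormedAddCommGroup F] {A : ℝ → F} {a : ℕ → ℝ}
    {n : ℕ} (hA : ∀ i < n, IntegrableOn A (Icc (a i) (a (i + 1)))) :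
    IntegrableOn A (Icc (a 0) (a n)) := by
  rcases eq_or_ne n 0 with rfl | hn
  · simp
  refine (integrableOn_finset_iUnion (s := Finset.range n).2
    fun i hi => hA i (Finset.mem_range.1 hi)).mono_set fun t ht => ?_
  simpa only [Finset.mem_range, mem_iUnion, exists_prop] using exists_mem_Icc_succ hn ht

variable {B : Type*} [NormedRing B] [NormedAlgebra ℝ B] [CompleteSpace B] {n : ℕ} {a : ℕ → ℝ}
  {g Φ Ψ : ℕ → ℝ → B} {f f' : ℝ → ℝ} {x : ℝ → B} {c d K s t : ℝ}

theorem norm_inverse_mul_le_exp_sum_mul {u : ℕ → ℝ} {y : ℕ → B} {i j : ℕ} (hone : ‖(1 : B)‖ ≤ 1)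
    (hpair : ∀ i < n, IsFundamentalPair (g i) (Φ i) (Ψ i) c d)
    (hΦ : ∀ i < n, ∀ z ∈ Icc c d, ‖Φ i z‖ ≤ K) (hΨ : ∀ i < n, ∀ z ∈ Icc c d, ‖Ψ i z‖ ≤ K)
    (hu : ∀ k < n, u k ∈ Icc c d)
    (hnode : ∀ k, k + 1 < n → Ψ k (u k) * y k = Ψ k (u (k + 1)) * y (k + 1))
    (hi : i < n) (hj : j < n) :
    ‖Ψ j (u j) * y j‖ ≤ Real.exp (K ^ 2 * ∑ k ∈ Finset.Ico 1 n,
      ∫ z in Icc c d, ‖g k z - g (k - 1) z‖) * ‖Ψ i (u i) * y i‖ := by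
  rw [Finset.mul_sum]
  refine le_exp_sum_Ico_mul (q := fun k => ‖Ψ k (u k) * y k‖)
    (w := fun k => K ^ 2 * ∫ z in Icc c d, ‖g k z - g (k - 1) z‖) (fun _ => norm_nonneg _)
    (fun _ => mul_nonneg (sq_nonneg K) (integral_nonneg fun _ => norm_nonneg _))
    (fun k hk => ?_) (fun k hk => ?_) hi hj
  · have hk' := Nat.lt_of_succ_lt hk
    rw [hnode k hk]
    exact (hpair k hk').norm_inverse_mul_le_exp_mul hone (hpair _ hk) (hΦ k hk') (hΨ _ hk)
      (hu _ hk) _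
  · have hk' := Nat.lt_of_succ_lt hk
    simp only [hnode k hk, Nat.add_sub_cancel, norm_sub_rev (g (k + 1) _)]
    exact (hpair _ hk).norm_inverse_mul_le_exp_mul hone (hpair k hk') (hΦ _ hk) (hΨ k hk')
      (hu _ hk) _

theorem norm_le_of_inverse_comp_mul_eq (hone : ‖(1 : B)‖ ≤ 1) (hn : n ≠ 0)
    (ha : ∀ i < n, a i ≤ a (i + 1)) (hpair : ∀ i < n, IsFundamentalPair (g i) (Φ i) (Ψ i) c d)
    (hΦ : ∀ i < n, ∀ y ∈ Icc c d, ‖Φ i y‖ ≤ K) (hΨ : ∀ i < n, ∀ y ∈ Icc c d, ‖Ψ i y‖ ≤ K)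
    (hfc : ∀ i < n, MapsTo f (Icc (a i) (a (i + 1))) (Icc c d))
    (hinv : ∀ i < n, ∀ s ∈ Icc (a i) (a (i + 1)), ∀ t ∈ Icc (a i) (a (i + 1)),
      Ψ i (f s) * x s = Ψ i (f t) * x t)
    (hs : s ∈ Icc (a 0) (a n)) (ht : t ∈ Icc (a 0) (a n)) :
    ‖x t‖ ≤ K ^ 2 * Real.exp (K ^ 2 * ∑ j ∈ Finset.Ico 1 n,
      ∫ y in Icc c d, ‖g j y - g (j - 1) y‖) * ‖x s‖ := by
  obtain ⟨i, hi, hsi⟩ := exists_mem_Icc_succ hn hs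
  obtain ⟨j, hj, htj⟩ := exists_mem_Icc_succ hn ht
  have hleft : ∀ k < n, a k ∈ Icc (a k) (a (k + 1)) := fun k hk => left_mem_Icc.2 (ha k hk)
  have hright : ∀ k < n, a (k + 1) ∈ Icc (a k) (a (k + 1)) := fun k hk => right_mem_Icc.2 (ha k hk)
  have hK : 0 ≤ K := (norm_nonneg _).trans (hΦ i hi _ (hfc i hi hsi))
  set S := ∑ j ∈ Finset.Ico 1 n, ∫ y in Icc c d, ‖g j y - g (j - 1) y‖
  have hchain : ‖Ψ j (f (a j)) * x (a j)‖ ≤ Real.exp (K ^ 2 * S) * ‖Ψ i (f (a i)) * x (a i)‖ :=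
    norm_inverse_mul_le_exp_sum_mul (u := fun k => f (a k)) (y := fun k => x (a k)) hone hpair hΦ hΨ
      (fun k hk => hfc k hk (hleft k hk)) (fun k hk => hinv k (Nat.lt_of_succ_lt hk) _
        (hleft k (Nat.lt_of_succ_lt hk)) _ (hright k (Nat.lt_of_succ_lt hk))) hi hj
  calc ‖x t‖ = ‖Φ j (f t) * (Ψ j (f t) * x t)‖ := by
        rw [← mul_assoc, (hpair j hj).mul_inverse _ (hfc j hj htj), one_mul]
    _ ≤ K * ‖Ψ j (f (a j)) * x (a j)‖ := by
        rw [hinv j hj t htj _ (hleft j hj)]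
        exact norm_mul_le_of_le (hΦ j hj _ (hfc j hj htj)) le_rfl
    _ ≤ K * (Real.exp (K ^ 2 * S) * ‖Ψ i (f (a i)) * x (a i)‖) := by gcongr
    _ ≤ K * (Real.exp (K ^ 2 * S) * (K * ‖x s‖)) := by
        gcongr
        rw [hinv i hi _ (hleft i hi) s hsi]
        exact norm_mul_le_of_le (hΨ i hi _ (hfc i hi hsi)) le_rfl
    _ = K ^ 2 * Real.exp (K ^ 2 * S) * ‖x s‖ := by ring

theorem norm_le_of_isPrimitiveOn_smul_comp_mul (hone : ‖(1 : B)‖ ≤ 1)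
    (ha : ∀ i < n, a i ≤ a (i + 1)) (hg : ∀ i < n, IntegrableOn (g i) (Icc c d))
    (hM : ∀ i < n, ∃ M, ∀ᵐ y, y ∈ Icc c d → ‖g i y‖ ≤ M) (hK₁ : 1 ≤ K)
    (hK : ∀ i < n, Real.exp (∫ y in Icc c d, ‖g i y‖) ≤ K)
    (hf : ∀ i < n, IsPrimitiveOn f f' (Icc (a i) (a (i + 1))))
    (hfc : ∀ i < n, MapsTo f (Icc (a i) (a (i + 1))) (Icc c d))
    (hx : ∀ i < n, IsPrimitiveOn x (fun t => f' t • g i (f t) * x t) (Icc (a i) (a (i + 1))))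
    (hs : s ∈ Icc (a 0) (a n)) (ht : t ∈ Icc (a 0) (a n)) :
    ‖x t‖ ≤ K ^ 2 * Real.exp (K ^ 2 * ∑ j ∈ Finset.Ico 1 n,
      ∫ y in Icc c d, ‖g j y - g (j - 1) y‖) * ‖x s‖ := by
  rcases eq_or_ne n 0 with rfl | hn
  · obtain rfl : s = t := subsingleton_Icc_of_ge le_rfl hs ht
    simpa using le_mul_of_one_le_left (norm_nonneg _) (one_le_pow₀ hK₁)
  choose! Φ Ψ hpair hΦ hΨ using fun i hi => exists_isFundamentalPair (hg i hi)
  have hle : ∀ i < n, Real.exp (∫ y in Icc c d, ‖g i y‖) * ‖(1 : B)‖ ≤ K := fun i hi =>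
    (mul_le_of_le_one_right (Real.exp_nonneg _) hone).trans (hK i hi)
  refine norm_le_of_inverse_comp_mul_eq hone hn ha hpair
    (fun i hi y hy => (hΦ i hi y hy).trans (hle i hi))
    (fun i hi y hy => (hΨ i hi y hy).trans (hle i hi)) hfc (fun i hi s hs t ht => ?_) hs ht
  obtain ⟨M, hM⟩ := hM i hi
  exact (hpair i hi).inverse_comp_mul_eq hM (hf i hi) (hfc i hi) (hx i hi) hs ht

end Mesh

theorem isPrimitiveOn_deriv {f : ℝ → ℝ} {a b : ℝ} (hab : a ≤ b)
    (hf : AbsolutelyContinuousOnInterval f a b) : IsPrimitiveOn f (deriv f) (Icc a b) where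
  integrableOn := (intervalIntegrable_iff_integrableOn_Icc_of_le hab).1 hf.intervalIntegrable_deriv
  sub_eq_integral x hx y hy := by
    rw [← uIcc_of_le hab] at hx hy
    exact (hf.mono (uIcc_subset_uIcc hx hy)).integral_deriv_eq_sub.symm

theorem AbsolutelyContinuousOn.absolutelyContinuousOnInterval {f : ℝ → ℝ} {a b : ℝ}
    (hf : AbsolutelyContinuousOn f (uIcc a b)) : AbsolutelyContinuousOnInterval f a b := by
  refine (absolutelyContinuousOnInterval_iff f a b).2 fun ε hε => ?_
  obtain ⟨δ, hδ, hfδ⟩ := hf ε hε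
  refine ⟨δ, hδ, fun ⟨n, I⟩ ⟨hmem, hdisj⟩ hlen => ?_⟩
  have hdist : ∀ i, |f (max (I i).1 (I i).2) - f (min (I i).1 (I i).2)| =
      dist (f (I i).1) (f (I i).2) := fun i => by
    rcases le_total (I i).1 (I i).2 with h | h
    · rw [max_eq_right h, min_eq_left h, ← Real.dist_eq, dist_comm]
    · rw [max_eq_left h, min_eq_right h, Real.dist_eq]
  simp only [← hdist]
  refine hfδ n (fun i => min (I i).1 (I i).2) (fun i => max (I i).1 (I i).2)
    (fun i hi => ?_) (fun i hi j hj hij => ?_) ?_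
  · obtain ⟨h₁, h₂⟩ := hmem i (Finset.mem_range.2 hi)
    exact ⟨min_rec' (· ∈ uIcc a b) h₁ h₂, max_rec' (· ∈ uIcc a b) h₁ h₂, min_le_max⟩
  · exact ((hdisj (Finset.mem_range.2 hi) (Finset.mem_range.2 hj) hij).mono
      Ioo_subset_Ioc_self Ioo_subset_Ioc_self).inter_eq
  · simpa only [max_sub_min_eq_abs', ← Real.dist_eq] using hlen

theorem IsDerivWithinOf.isPrimitiveOn {f f' : ℝ → ℝ} {a b : ℝ} (hab : a ≤ b)
    (hf' : IsDerivWithinOf f' f (Icc a b)) (hf : AbsolutelyContinuousOn f (Icc a b)) :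
    IsPrimitiveOn f f' (Icc a b) := by
  rw [← uIcc_of_le hab] at hf
  have hac := hf.absolutelyContinuousOnInterval
  refine (isPrimitiveOn_deriv hab hac).congr_ae ?_
  filter_upwards [hac.ae_differentiableAt, Measure.ae_ne volume a, Measure.ae_ne volume b]
    with t hdiff hta htb ht
  have hwithin := (hf' t ht).1 (hdiff (uIcc_of_le hab ▸ ht)).differentiableWithinAt
  exact (hwithin.hasDerivAt (Icc_mem_nhds (ht.1.lt_of_ne' hta) (ht.2.lt_of_ne htb))).deriv

theorem LocEssBdd.exists_ae_norm_le {F : Type*} [NormedAddCommGroup F] {y : ℝ → F} {J : Set ℝ}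
    (hy : LocEssBdd y J) {c d : ℝ} (hcd : Icc c d ⊆ J) :
    ∃ M, ∀ᵐ t, t ∈ Icc c d → ‖y t‖ ≤ M := by
  rcases lt_or_ge d c with hdc | hle
  · simp [Icc_eq_empty hdc.not_ge]
  obtain ⟨M, hM⟩ := hy.2 c (hcd (left_mem_Icc.2 hle)) d (hcd (right_mem_Icc.2 hle))
  rw [uIcc_of_le hle] at hM
  exact ⟨M, (ae_restrict_iff' measurableSet_Icc).1 hM⟩

theorem IsEvolutionOperator.isPrimitiveOn {E : Type*} [NormedAddCommGroup E] [NormedSpace ℝ E]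
    {A : ℝ → E →L[ℝ] E} {X : ℝ → ℝ → E →L[ℝ] E} {a b s : ℝ}
    (hX : IsEvolutionOperator (Icc a b) A X) (hA : IntegrableOn A (Icc a b)) (hs : s ∈ Icc a b) :
    IsPrimitiveOn (fun t => X t s) (fun t => A t * X t s) (Icc a b) where
  integrableOn := integrableOn_bilin (ContinuousLinearMap.mul ℝ (E →L[ℝ] E)) hA (hX s hs).1
  sub_eq_integral u hu t ht := (hX s hs).2.2 u hu t ht

theorem ae_eq_of_eqOn_Ico {α : Type*} {A p : ℝ → α} {a b : ℝ} (hA : EqOn A p (Ico a b)) :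
    ∀ᵐ t, t ∈ Icc a b → A t = p t := by
  filter_upwards [Measure.ae_ne volume b] with t htb ht using hA ⟨ht.1, ht.2.lt_of_ne htb⟩

section Piecewise

variable {n : ℕ} {a : ℕ → ℝ} {f f' : ℝ → ℝ}

theorem integrableOn_of_eqOn_smul_comp {F : Type*} [NormedAddCommGroup F] [NormedSpace ℝ F]
    [CompleteSpace F] {g : ℕ → ℝ → F} {A : ℝ → F} {c d : ℝ}
    (hg : ∀ i < n, IntegrableOn (g i) (Icc c d))
    (hM : ∀ i < n, ∃ M, ∀ᵐ y, y ∈ Icc c d → ‖g i y‖ ≤ M)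
    (hf : ∀ i < n, IsPrimitiveOn f f' (Icc (a i) (a (i + 1))))
    (hfc : ∀ i < n, MapsTo f (Icc (a i) (a (i + 1))) (Icc c d))
    (hA : ∀ i < n, EqOn A (fun t => f' t • g i (f t)) (Ico (a i) (a (i + 1)))) :
    IntegrableOn A (Icc (a 0) (a n)) := by
  refine integrableOn_Icc_of_succ fun i hi => ?_
  obtain ⟨M, hM⟩ := hM i hi
  exact ((isPrimitiveOn_integral (hg i hi)).comp hM (hf i hi) (hfc i hi)).integrableOn.congr <|
    (ae_restrict_iff' measurableSet_Icc).2 <| (ae_eq_of_eqOn_Ico (hA i hi)).mono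
      fun _ h ht => (h ht).symm

theorem IsEvolutionOperator.norm_le {E : Type*} [NormedAddCommGroup E] [NormedSpace ℝ E]
    [CompleteSpace E] {G : ℕ → ℝ → E →L[ℝ] E} {A : ℝ → E →L[ℝ] E} {X : ℝ → ℝ → E →L[ℝ] E}
    {c d K s t : ℝ}
    (hX : IsEvolutionOperator (Icc (a 0) (a n)) A X) (ha : ∀ i < n, a i ≤ a (i + 1))
    (hG : ∀ i < n, IntegrableOn (G i) (Icc c d))
    (hM : ∀ i < n, ∃ M, ∀ᵐ y, y ∈ Icc c d → ‖G i y‖ ≤ M) (hK₁ : 1 ≤ K)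
    (hK : ∀ i < n, Real.exp (∫ y in Icc c d, ‖G i y‖) ≤ K)
    (hf : IsPrimitiveOn f f' (Icc (a 0) (a n))) (hfc : MapsTo f (Icc (a 0) (a n)) (Icc c d))
    (hA : ∀ i < n, EqOn A (fun t => f' t • G i (f t)) (Ico (a i) (a (i + 1))))
    (hs : s ∈ Icc (a 0) (a n)) (ht : t ∈ Icc (a 0) (a n)) :
    ‖X t s‖ ≤ K ^ 2 * Real.exp (K ^ 2 * ∑ j ∈ Finset.Ico 1 n,
      ∫ y in Icc c d, ‖G j y - G (j - 1) y‖) := by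
  have hsub : ∀ i < n, Icc (a i) (a (i + 1)) ⊆ Icc (a 0) (a n) := fun i hi =>
    Icc_succ_subset_Icc ha hi
  have hf' : ∀ i < n, IsPrimitiveOn f f' (Icc (a i) (a (i + 1))) := fun i hi =>
    hf.mono (hsub i hi)
  have hfc' : ∀ i < n, MapsTo f (Icc (a i) (a (i + 1))) (Icc c d) := fun i hi =>
    hfc.mono_left (hsub i hi)
  have hXs := hX.isPrimitiveOn (integrableOn_of_eqOn_smul_comp hG hM hf' hfc' hA) hs
  have hle := norm_le_of_isPrimitiveOn_smul_comp_mul (x := fun t => X t s)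
    ContinuousLinearMap.norm_id_le ha hG hM hK₁ hK hf' hfc' (fun i hi => ?_) hs ht
  · rw [(hX s hs).2.1] at hle
    exact hle.trans (mul_le_of_le_one_right (by positivity) ContinuousLinearMap.norm_id_le)
  · exact (hXs.mono (hsub i hi)).congr_ae ((ae_eq_of_eqOn_Ico (hA i hi)).mono fun t h ht => by
      rw [h ht])

end Piecewise

theorem setIntegral_norm_mono {α F : Type*} [MeasurableSpace α] [NormedAddCommGroup F]
    {μ : Measure α} {s t : Set α} {h : α → F} (hst : s ⊆ t) (hh : IntegrableOn h t μ) :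
    ∫ x in s, ‖h x‖ ∂μ ≤ ∫ x in t, ‖h x‖ ∂μ :=
  setIntegral_mono_set hh.norm (Eventually.of_forall fun _ => norm_nonneg _) hst.eventuallyLE

theorem one_le_exp_iSup_integral_norm {ι α F : Type*} [MeasurableSpace α] [NormedAddCommGroup F]
    {μ : Measure α} (h : ι → α → F) : 1 ≤ Real.exp (⨆ i, ∫ x, ‖h i x‖ ∂μ) :=
  Real.one_le_exp (Real.iSup_nonneg fun _ => integral_nonneg fun _ => norm_nonneg _)

theorem sq_mul_exp_sq_mul_le {N V : ℝ} (hN : 1 ≤ N) (hV : 0 ≤ V) :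
    N ^ 2 * Real.exp (N ^ 2 * V) ≤ N ^ 2 * Real.exp (N ^ (3 + 2 * N) * V) := by
  gcongr
  rw [← Real.rpow_two]
  exact Real.rpow_le_rpow_of_exponent_le hN (by linarith)

theorem stmt9_general {E : Type*} [NormedAddCommGroup E] [NormedSpace ℝ E] [CompleteSpace E]
    (J : Set ℝ) (n : ℕ) (a : ℕ → ℝ)
    (ha : ∀ i < n, a i ≤ a (i + 1))
    (G : ℕ → ℝ → E →L[ℝ] E)
    (hGm : ∀ i < n, LocEssBdd (G i) J)
    (hGi : ∀ i < n, IntegrableOn (G i) J)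
    (N V : ℝ)
    (hN : N = Real.exp (⨆ i : Fin n, ∫ u in J, ‖G i u‖))
    (hV : V = ∑ j ∈ Finset.Ico 1 n, ∫ u in J, ‖G j u - G (j - 1) u‖)
    (f f' : ℝ → ℝ)
    (hf : AbsolutelyContinuousOn f (Icc (a 0) (a n)))
    (hf' : IsDerivWithinOf f' f (Icc (a 0) (a n)))
    (hfJ : f '' Icc (a 0) (a n) ⊆ J)
    (A : ℝ → E →L[ℝ] E)
    (hA : ∀ i < n, ∀ t ∈ Ico (a i) (a (i + 1)), A t = f' t • G i (f t)) :
    IntegrableOn A (Icc (a 0) (a n)) ∧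
    ∀ X, IsEvolutionOperator (Icc (a 0) (a n)) A X →
      ∀ s ∈ Icc (a 0) (a n), ∀ t ∈ Icc (a 0) (a n),
        ‖X t s‖ ≤ N ^ 2 * Real.exp (N ^ 2 * V) := by
  have hab : a 0 ≤ a n :=
    monotoneOn_Iic_of_le_succ ha (Nat.zero_le n) self_mem_Iic (Nat.zero_le n)
  have hprim : IsPrimitiveOn f f' (Icc (a 0) (a n)) := hf'.isPrimitiveOn hab hf
  obtain ⟨c, d, himage⟩ : ∃ c d, f '' Icc (a 0) (a n) = Icc c d :=
    ⟨_, _, hprim.continuousOn.image_Icc hab⟩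
  have hfc : MapsTo f (Icc (a 0) (a n)) (Icc c d) := himage ▸ mapsTo_image f _
  have hcd : Icc c d ⊆ J := himage ▸ hfJ
  have hG : ∀ i < n, IntegrableOn (G i) (Icc c d) := fun i hi => (hGi i hi).mono_set hcd
  have hM : ∀ i < n, ∃ M, ∀ᵐ y, y ∈ Icc c d → ‖G i y‖ ≤ M := fun i hi =>
    (hGm i hi).exists_ae_norm_le hcd
  refine ⟨integrableOn_of_eqOn_smul_comp hG hM
    (fun i hi => hprim.mono (Icc_succ_subset_Icc ha hi))
    (fun i hi => hfc.mono_left (Icc_succ_subset_Icc ha hi)) hA, fun X hX s hs t ht => ?_⟩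
  have hNle : ∀ i < n, Real.exp (∫ y in Icc c d, ‖G i y‖) ≤ N := fun i hi => by
    rw [hN, Real.exp_le_exp]
    exact (setIntegral_norm_mono hcd (hGi i hi)).trans
      (le_ciSup (f := fun i : Fin n => ∫ u in J, ‖G i u‖) (finite_range _).bddAbove ⟨i, hi⟩)
  have hVle : ∑ j ∈ Finset.Ico 1 n, ∫ u in Icc c d, ‖G j u - G (j - 1) u‖ ≤ V := by
    refine hV ▸ Finset.sum_le_sum fun j hj => setIntegral_norm_mono hcd ?_
    have hjn : j < n := (Finset.mem_Ico.1 hj).2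
    exact (hGi j hjn).sub (hGi (j - 1) ((j.sub_le 1).trans_lt hjn))
  refine (hX.norm_le ha hG hM ?_ hNle hprim hfc hA hs ht).trans (by gcongr)
  exact hN ▸ one_le_exp_iSup_integral_norm _

/-- key stability lemma. Piecewise substituted systems
`A(t) = f'(t)·Gᵢ(f(t))` on `[aᵢ, a_{i+1})` are uniformly bistable, with the explicit
bound `N² exp(N^{3+2N} V)`. -/
theorem stmt9 {E : Type*} [NormedAddCommGroup E] [NormedSpace ℝ E] [CompleteSpace E]
    (J : Set ℝ) (hJ : J.OrdConnected) (n : ℕ) (a : ℕ → ℝ)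
    (ha : ∀ i < n, a i < a (i + 1))
    (G : ℕ → ℝ → E →L[ℝ] E)
    (hGm : ∀ i < n, LocEssBdd (G i) J)
    (hGi : ∀ i < n, IntegrableOn (G i) J)
    (N V : ℝ)
    (hN : N = Real.exp (⨆ i : Fin n, ∫ u in J, ‖G i u‖))
    (hV : V = ∑ j ∈ Finset.Ico 1 n, ∫ u in J, ‖G j u - G (j - 1) u‖)
    (f f' : ℝ → ℝ)
    (hf : AbsolutelyContinuousOn f (Set.Icc (a 0) (a n)))
    (hf' : IsDerivWithinOf f' f (Set.Icc (a 0) (a n)))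
    (hfJ : f '' Set.Icc (a 0) (a n) ⊆ J)
    (A : ℝ → E →L[ℝ] E)
    (hA : ∀ i < n, ∀ t ∈ Set.Ico (a i) (a (i + 1)), A t = f' t • G i (f t)) :
    IntegrableOn A (Set.Icc (a 0) (a n)) ∧
    ∀ X, IsEvolutionOperator (Set.Icc (a 0) (a n)) A X →
      ∀ s ∈ Set.Icc (a 0) (a n), ∀ t ∈ Set.Icc (a 0) (a n), s ≤ t →
        ‖X t s‖ ≤ N ^ 2 * Real.exp (N ^ (3 + 2 * N) * V) ∧
        ‖X s t‖ ≤ N ^ 2 * Real.exp (N ^ (3 + 2 * N) * V) := by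
  have hle : N ^ 2 * Real.exp (N ^ 2 * V) ≤ N ^ 2 * Real.exp (N ^ (3 + 2 * N) * V) :=
    sq_mul_exp_sq_mul_le (hN ▸ one_le_exp_iSup_integral_norm _)
      (hV ▸ Finset.sum_nonneg fun _ _ => integral_nonneg fun _ => norm_nonneg _)
  obtain ⟨hAint, hbound⟩ :=
    stmt9_general J n a (fun i hi => (ha i hi).le) G hGm hGi N V hN hV f f' hf hf' hfJ A hA
  exact ⟨hAint, fun X hX s hs t ht _ =>
    ⟨(hbound X hX s hs t ht).trans hle, (hbound X hX t ht s hs).trans hle⟩⟩
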